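/- Let C be a normal, closed cone with nonempty interior in a real Banach space. For any u ∈ int C, the map f : int C → int C defined by f(x) = x + u is τ-condensing, where τ is Kuratowski's measure of noncompactness for Thompson's metric d_T. -/

import Mathlib

/-!
Write `x ≤ y` for `y - x ∈ C`. If `y ≤ β x` and `x ≤ M u`, then `y + u ≤ γ (x + u)` with
`γ = (M β + 1) / (M + 1)`: the deficit `(β - γ) x` is absorbed by `(γ - 1) u`, because
`(β - γ) M = γ - 1`. A Thompson-bounded set `A ⊆ interior C` satisfies `A ≤ M u` for some `M > 0`,
since `u` is an order unit (`exists_smul_sub_mem`). Hence on `A` the translation by `u` maps sets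
of Thompson diameter at most `d` to sets of diameter at most `φ d = log ((M e ^ d + 1) / (M + 1))`
(`thompsonDist_add_le`). As `φ` is continuous and `φ d < d` for `d > 0`, a finite cover of `A` by
sets of diameter close enough to `τ(A)` yields a cover of the image with diameters bounded by a
number below `τ(A)`.
-/

open Filter Topology Bornology

section ConeDefs

variable {X : Type*} [NormedAddCommGroup X] [NormedSpace ℝ X]

/-- `C` is a closed cone: a closed convex set with `l • C ⊆ C` for `l ≥ 0` and `C ∩ (-C) = {0}`. -/
def IsClosedCone (C : Set X) : Prop :=
  IsClosed C ∧ Convex ℝ C ∧ (∀ l : ℝ, 0 ≤ l → ∀ x ∈ C, l • x ∈ C) ∧ C ∩ (-C) = {0}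

/-- `C` is a normal cone: `0 ≤ x ≤ y` implies `‖x‖ ≤ κ * ‖y‖`. -/
def IsNormalCone (C : Set X) : Prop :=
  ∃ κ : ℝ, ∀ x y : X, x ∈ C → y - x ∈ C → ‖x‖ ≤ κ * ‖y‖

/-- `C` is a regular cone: every decreasing sequence in `C` converges in norm. -/
def IsRegularCone (C : Set X) : Prop :=
  ∀ x : ℕ → X, (∀ n, x n ∈ C) → (∀ n, x n - x (n + 1) ∈ C) →
    ∃ l : X, Tendsto x atTop (𝓝 l)

/-- Thompson's metric: `d_T(x,y) = log inf {β ≥ 1 : β⁻¹ • x ≤ y ∧ y ≤ β • x}`,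
where `≤` is the order induced by the cone `C`. -/
noncomputable def thompsonDist (C : Set X) (x y : X) : ℝ :=
  Real.log (sInf {β : ℝ | 1 ≤ β ∧ y - β⁻¹ • x ∈ C ∧ β • x - y ∈ C})

/-- `A` is bounded in Thompson's metric. -/
def TBounded (C A : Set X) : Prop :=
  ∃ d : ℝ, ∀ x ∈ A, ∀ y ∈ A, thompsonDist C x y ≤ d

/-- Kuratowski's measure of noncompactness for the norm:
the infimum of all `d > 0` such that `A` admits a finite cover by sets of diameter at most `d`. -/
noncomputable def kuratowski (A : Set X) : ℝ :=
  sInf {d : ℝ | 0 < d ∧ ∃ (n : ℕ) (S : Fin n → Set X), A ⊆ ⋃ i, S i ∧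
    ∀ i, IsBounded (S i) ∧ Metric.diam (S i) ≤ d}

/-- Kuratowski's measure of noncompactness for Thompson's metric: the infimum of all `d > 0`
such that `A` admits a finite cover by subsets of `interior C` of `d_T`-diameter at most `d`. -/
noncomputable def tauMNC (C A : Set X) : ℝ :=
  sInf {d : ℝ | 0 < d ∧ ∃ (n : ℕ) (S : Fin n → Set X), A ⊆ ⋃ i, S i ∧
    ∀ i, S i ⊆ interior C ∧ ∀ x ∈ S i, ∀ y ∈ S i, thompsonDist C x y ≤ d}

/-- `f` is continuous and `γ`-condensing on `D`. -/
def GammaCondensing {X : Type*} [NormedAddCommGroup X] [NormedSpace ℝ X]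
    (f : X → X) (D : Set X) : Prop :=
  ContinuousOn f D ∧ ∀ A ⊆ D, IsBounded A → 0 < kuratowski A →
    kuratowski (f '' A) < kuratowski A

/-- `f` is continuous and `τ`-condensing on `D`. -/
def TauCondensing (C : Set X) (f : X → X) (D : Set X) : Prop :=
  ContinuousOn f D ∧ ∀ A ⊆ D, TBounded C A → 0 < tauMNC C A →
    tauMNC C (f '' A) < tauMNC C A

/-- `f` is nonexpansive with respect to Thompson's metric on `D`. -/
def TNonexpansiveOn (C : Set X) (f : X → X) (D : Set X) : Prop :=
  ∀ x ∈ D, ∀ y ∈ D, thompsonDist C (f x) (f y) ≤ thompsonDist C x y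

/-- `f` is order-preserving on `D` for the order induced by `C`. -/
def OrderPreservingOn (C : Set X) (f : X → X) (D : Set X) : Prop :=
  ∀ x ∈ D, ∀ y ∈ D, y - x ∈ C → f y - f x ∈ C

/-- `f` is subhomogeneous on `D`: `f (t • x) ≤ t • f x` for `t ≥ 1`. -/
def SubhomogeneousOn (C : Set X) (f : X → X) (D : Set X) : Prop :=
  ∀ t : ℝ, 1 ≤ t → ∀ x ∈ D, t • f x - f (t • x) ∈ C

/-- `M(x/y) = inf {β > 0 : x ≤ β • y}`, valued in `ℝ≥0∞` (`⊤` if no such `β` exists). -/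
noncomputable def Mratio (C : Set X) (x y : X) : ENNReal :=
  sInf {b : ENNReal | ∃ β : ℝ, 0 < β ∧ b = ENNReal.ofReal β ∧ β • y - x ∈ C}

/-- `m(x/y) = sup {α > 0 : α • y ≤ x}`, valued in `ℝ≥0∞`. -/
noncomputable def mratio (C : Set X) (x y : X) : ENNReal :=
  sSup {b : ENNReal | ∃ α : ℝ, 0 < α ∧ b = ENNReal.ofReal α ∧ x - α • y ∈ C}

/-- The upper Collatz–Wielandt number `r(f) = inf_{x ∈ int C} M(f(x)/x)`. -/
noncomputable def upperCW (C : Set X) (f : X → X) : ENNReal :=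
  ⨅ x ∈ interior C, Mratio C (f x) x

/-- The lower Collatz–Wielandt number `λ(f) = sup_{x ∈ int C} m(f(x)/x)`. -/
noncomputable def lowerCW (C : Set X) (f : X → X) : ENNReal :=
  ⨆ x ∈ interior C, mratio C (f x) x

/-- The order-unit norm `‖x‖_u = inf {k > 0 : -k • u ≤ x ≤ k • u}`. -/
noncomputable def orderUnitNorm (C : Set X) (u x : X) : ℝ :=
  sInf {k : ℝ | 0 < k ∧ x + k • u ∈ C ∧ k • u - x ∈ C}

end ConeDefs

section ConeLemmas

variable {X : Type*} [NormedAddCommGroup X] [NormedSpace ℝ X] {C : Set X}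

lemma IsClosedCone.smul_mem (hC : IsClosedCone C) {l : ℝ} (hl : 0 ≤ l) {x : X} (hx : x ∈ C) :
    l • x ∈ C := hC.2.2.1 l hl x hx

lemma IsClosedCone.add_mem (hC : IsClosedCone C) {x y : X} (hx : x ∈ C) (hy : y ∈ C) :
    x + y ∈ C := by
  have h := hC.2.1 hx hy (by norm_num : (0 : ℝ) ≤ 1 / 2) (by norm_num : (0 : ℝ) ≤ 1 / 2)
    (by norm_num)
  have h2 := hC.smul_mem (by norm_num : (0 : ℝ) ≤ 2) h
  have e : (2 : ℝ) • ((1 / 2 : ℝ) • x + (1 / 2 : ℝ) • y) = x + y := by module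
  rwa [e] at h2

lemma IsClosedCone.add_mem_interior (hC : IsClosedCone C) {x y : X} (hx : x ∈ C)
    (hy : y ∈ interior C) : x + y ∈ interior C := by
  have hsub : (fun z => z - x) ⁻¹' interior C ⊆ C := by
    intro z hz
    have h := hC.add_mem hx (interior_subset hz)
    rwa [add_sub_cancel] at h
  have hopen : IsOpen ((fun z => z - x) ⁻¹' interior C) :=
    isOpen_interior.preimage (by fun_prop)
  apply interior_maximal hsub hopen
  simpa using hy

/-- An interior point of a cone is an order unit. -/
lemma exists_smul_sub_mem (hC : IsClosedCone C) {u : X} (hu : u ∈ interior C) (x : X) :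
    ∃ M : ℝ, 0 < M ∧ M • u - x ∈ C := by
  have hcont : Tendsto (fun t : ℝ => u - t • x) (𝓝 0) (𝓝 u) := by
    have : Continuous (fun t : ℝ => u - t • x) := by fun_prop
    simpa using this.tendsto 0
  have hev : ∀ᶠ t : ℝ in 𝓝[>] 0, u - t • x ∈ C :=
    (hcont.eventually (mem_interior_iff_mem_nhds.1 hu)).filter_mono nhdsWithin_le_nhds
  obtain ⟨t, ht, ht0⟩ := (hev.and self_mem_nhdsWithin).exists
  have ht0 : (0 : ℝ) < t := ht0
  refine ⟨t⁻¹, inv_pos.2 ht0, ?_⟩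
  have h := hC.smul_mem (inv_pos.2 ht0).le ht
  rwa [smul_sub, smul_smul, inv_mul_cancel₀ ht0.ne', one_smul] at h

/-- The set in the definition of Thompson's metric, written without inverses; in this form it is
visibly closed. -/
lemma thompson_set_eq (hC : IsClosedCone C) (x y : X) :
    {β : ℝ | 1 ≤ β ∧ y - β⁻¹ • x ∈ C ∧ β • x - y ∈ C} =
      {β : ℝ | 1 ≤ β ∧ β • y - x ∈ C ∧ β • x - y ∈ C} := by
  ext β
  simp only [Set.mem_ofPred_eq]
  refine and_congr_right fun hβ => and_congr_left fun _ => ?_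
  have h0 : 0 < β := by linarith
  constructor
  · intro h
    have h := hC.smul_mem h0.le h
    rwa [smul_sub, smul_smul, mul_inv_cancel₀ h0.ne', one_smul] at h
  · intro h
    have h := hC.smul_mem (inv_pos.2 h0).le h
    rwa [smul_sub, smul_smul, inv_mul_cancel₀ h0.ne', one_smul] at h

lemma thompsonDist_le_log (hC : IsClosedCone C) {x y : X} {γ : ℝ} (hγ : 1 ≤ γ)
    (h1 : γ • y - x ∈ C) (h2 : γ • x - y ∈ C) : thompsonDist C x y ≤ Real.log γ := by
  unfold thompsonDist
  rw [thompson_set_eq hC]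
  have hmem : γ ∈ {β : ℝ | 1 ≤ β ∧ β • y - x ∈ C ∧ β • x - y ∈ C} := ⟨hγ, h1, h2⟩
  have hone : 1 ≤ sInf {β : ℝ | 1 ≤ β ∧ β • y - x ∈ C ∧ β • x - y ∈ C} :=
    le_csInf ⟨γ, hmem⟩ fun b hb => hb.1
  exact Real.log_le_log (by linarith) (csInf_le ⟨1, fun b hb => hb.1⟩ hmem)

/-- The infimum defining Thompson's metric is attained, so a bound on the distance of two interior
points is an order comparison. -/
lemma of_thompsonDist_le (hC : IsClosedCone C) {x y : X} (hx : x ∈ interior C)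
    (hy : y ∈ interior C) {d : ℝ} (h : thompsonDist C x y ≤ d) :
    1 ≤ Real.exp d ∧ Real.exp d • y - x ∈ C ∧ Real.exp d • x - y ∈ C := by
  unfold thompsonDist at h
  rw [thompson_set_eq hC] at h
  set S := {β : ℝ | 1 ≤ β ∧ β • y - x ∈ C ∧ β • x - y ∈ C} with hS
  have hxC := interior_subset hx
  have hyC := interior_subset hy
  have mono : ∀ {a b : ℝ} {v w : X}, a ≤ b → v ∈ C → a • v - w ∈ C → b • v - w ∈ C := by
    intro a b v w hab hv hw
    have h := hC.add_mem (hC.smul_mem (sub_nonneg.2 hab) hv) hw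
    have e : (b - a) • v + (a • v - w) = b • v - w := by module
    rwa [e] at h
  have hne : S.Nonempty := by
    obtain ⟨M, -, hM⟩ := exists_smul_sub_mem hC hy x
    obtain ⟨N, -, hN⟩ := exists_smul_sub_mem hC hx y
    refine ⟨max 1 (max M N), le_max_left _ _, ?_, ?_⟩
    · exact mono ((le_max_left M N).trans (le_max_right _ _)) hyC hM
    · exact mono ((le_max_right M N).trans (le_max_right _ _)) hxC hN
  have hclosed : IsClosed S := by
    refine isClosed_Ici.inter (IsClosed.inter ?_ ?_)
    · exact hC.1.preimage (f := fun β : ℝ => β • y - x) (by fun_prop)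
    · exact hC.1.preimage (f := fun β : ℝ => β • x - y) (by fun_prop)
  obtain ⟨h1, h2, h3⟩ := hclosed.csInf_mem hne ⟨1, fun b hb => hb.1⟩
  have hle : sInf S ≤ Real.exp d := (Real.log_le_iff_le_exp (by linarith)).1 h
  exact ⟨h1.trans hle, mono hle hyC h2, mono hle hxC h3⟩

/-- Below `M • u`, translation by `u` improves the order comparison `y ≤ β x` to
`y + u ≤ γ (x + u)` with `γ = (M * β + 1) / (M + 1)`. -/
lemma translate_comparison (hC : IsClosedCone C) {u x y : X} {M β : ℝ} (hM : 0 < M)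
    (hβ : 1 ≤ β) (hx : M • u - x ∈ C) (hxy : β • x - y ∈ C) :
    ((M * β + 1) / (M + 1)) • (x + u) - (y + u) ∈ C := by
  have hM1 : M + 1 ≠ 0 := by positivity
  have hc : 0 ≤ (β - 1) / (M + 1) := div_nonneg (by linarith) (by linarith)
  have h := hC.add_mem hxy (hC.smul_mem hc hx)
  have e : (β • x - y) + ((β - 1) / (M + 1)) • (M • u - x) =
      ((M * β + 1) / (M + 1)) • (x + u) - (y + u) := by
    match_scalars <;> field_simp <;> ring
  rwa [e] at h

lemma thompsonDist_add_le (hC : IsClosedCone C) {u x y : X} {M d : ℝ} (hM : 0 < M)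
    (hx : x ∈ interior C) (hy : y ∈ interior C) (hxM : M • u - x ∈ C) (hyM : M • u - y ∈ C)
    (h : thompsonDist C x y ≤ d) :
    thompsonDist C (x + u) (y + u) ≤ Real.log ((M * Real.exp d + 1) / (M + 1)) := by
  obtain ⟨h1, h2, h3⟩ := of_thompsonDist_le hC hx hy h
  refine thompsonDist_le_log hC ?_ (translate_comparison hC hM h1 hyM h2)
    (translate_comparison hC hM h1 hxM h3)
  rw [le_div_iff₀ (by linarith)]
  nlinarith

/-- A Thompson-bounded set of interior points is bounded above by a multiple of `u`. -/
lemma TBounded.exists_upper_bound (hC : IsClosedCone C) {u : X} (hu : u ∈ interior C) {A : Set X}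
    (hA : A ⊆ interior C) (hb : TBounded C A) : ∃ M : ℝ, 0 < M ∧ ∀ x ∈ A, M • u - x ∈ C := by
  rcases A.eq_empty_or_nonempty with rfl | ⟨x₀, hx₀⟩
  · exact ⟨1, one_pos, by simp⟩
  obtain ⟨d, hd⟩ := hb
  obtain ⟨N, hN, hNu⟩ := exists_smul_sub_mem hC hu x₀
  refine ⟨Real.exp d * N, by positivity, fun x hx => ?_⟩
  obtain ⟨-, -, h⟩ := of_thompsonDist_le hC (hA hx₀) (hA hx) (hd x₀ hx₀ x hx)
  have h' := hC.add_mem (hC.smul_mem (Real.exp_pos d).le hNu) h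
  have e : Real.exp d • (N • u - x₀) + (Real.exp d • x₀ - x) = (Real.exp d * N) • u - x := by
    module
  rwa [e] at h'

end ConeLemmas

/-- For a normal closed cone `C` with nonempty interior and `u ∈ interior C`,
the map `x ↦ x + u` is `τ`-condensing on `interior C`. -/
theorem stmt2 {X : Type*} [NormedAddCommGroup X] [NormedSpace ℝ X] [CompleteSpace X]
    {C : Set X} (hC : IsClosedCone C) (hnorm : IsNormalCone C)
    (hne : (interior C).Nonempty) {u : X} (hu : u ∈ interior C) :
    TauCondensing C (fun x => x + u) (interior C) := by
  refine ⟨by fun_prop, fun A hA hb hτ => ?_⟩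
  obtain ⟨M, hM, hAM⟩ := hb.exists_upper_bound hC hu hA
  have hM1 : 0 < M + 1 := by linarith
  have hφpos : ∀ d : ℝ, 0 < (M * Real.exp d + 1) / (M + 1) := fun d => by positivity
  have hφcont : Continuous fun d : ℝ => Real.log ((M * Real.exp d + 1) / (M + 1)) :=
    Continuous.log (by fun_prop) fun d => (hφpos d).ne'
  have hφlt : Real.log ((M * Real.exp (tauMNC C A) + 1) / (M + 1)) < tauMNC C A := by
    rw [Real.log_lt_iff_lt_exp (hφpos _), div_lt_iff₀ hM1]
    have := Real.one_lt_exp_iff.2 hτ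
    linarith
  obtain ⟨ε, hε, hball⟩ := Metric.eventually_nhds_iff.1
    (hφcont.continuousAt.eventually (gt_mem_nhds hφlt))
  -- `sInf ∅ = 0`, so positivity of `tauMNC C A` gives an admissible cover.
  have hne : {d : ℝ | 0 < d ∧ ∃ (n : ℕ) (S : Fin n → Set X), A ⊆ ⋃ i, S i ∧
      ∀ i, S i ⊆ interior C ∧ ∀ x ∈ S i, ∀ y ∈ S i, thompsonDist C x y ≤ d}.Nonempty := by
    by_contra h
    rw [Set.not_nonempty_iff_eq_empty] at h
    unfold tauMNC at hτ
    rw [h, Real.sInf_empty] at hτ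
    exact hτ.false
  obtain ⟨d, hd, hdε⟩ := Real.lt_sInf_add_pos hne hε
  have hτd : tauMNC C A ≤ d := csInf_le ⟨0, fun b hb => hb.1.le⟩ hd
  change d < tauMNC C A + ε at hdε
  have hφd : Real.log ((M * Real.exp d + 1) / (M + 1)) < tauMNC C A := by
    apply hball
    rw [Real.dist_eq, abs_of_nonneg (by linarith)]
    linarith
  obtain ⟨hd0, n, S, hcov, hS⟩ := hd
  refine lt_of_le_of_lt (csInf_le ⟨0, fun b hb => hb.1.le⟩ ⟨?_, n,
    fun i => (fun x => x + u) '' (S i ∩ A), ?_, fun i => ⟨?_, ?_⟩⟩) hφd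
  · apply Real.log_pos
    rw [lt_div_iff₀ hM1]
    have := Real.one_lt_exp_iff.2 hd0
    nlinarith
  · rintro _ ⟨x, hx, rfl⟩
    obtain ⟨i, hi⟩ := Set.mem_iUnion.1 (hcov hx)
    exact Set.mem_iUnion.2 ⟨i, x, ⟨hi, hx⟩, rfl⟩
  · rintro _ ⟨x, hx, rfl⟩
    exact hC.add_mem_interior (interior_subset (hA hx.2)) hu
  · rintro _ ⟨x, hx, rfl⟩ _ ⟨y, hy, rfl⟩
    exact thompsonDist_add_le hC hM (hA hx.2) (hA hy.2) (hAM x hx.2) (hAM y hy.2)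
      ((hS i).2 x hx.1 y hy.1)
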